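/- arXiv:2204.00339 — 6 statements merged into one kernel-verified Lean document; each statement's English description precedes it below -/
import Mathlib

section
/- Let A ∈ ℝ^{n×n}, B ∈ ℝ^{n×m}, let Q ∈ ℝ^{n×n} and R ∈ ℝ^{m×m} be symmetric positive definite, and for i ≥ 1 define Q_i := ∑_{j=0}^{i−1} A_jᵀ Q A_j, S_i := ∑_{j=1}^{i−1} A_jᵀ Q B_j, R_i := i·R + ∑_{j=1}^{i−1} B_jᵀ Q B_j, where A_j := A^j and B_j := ∑_{l=0}^{j−1} A^l B. Then the block matrix [[Q_i, S_i], [S_iᵀ, R_i]] ∈ ℝ^{(n+m)×(n+m)} is symmetric positive definite (in particular invertible). -/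
open Matrix

/-- `B_j := ∑_{l=0}^{j−1} A^l B` (so `B_0 = 0`). -/
noncomputable def Bmat {n m : ℕ} (A : Matrix (Fin n) (Fin n) ℝ)
    (B : Matrix (Fin n) (Fin m) ℝ) (j : ℕ) : Matrix (Fin n) (Fin m) ℝ :=
  ∑ l ∈ Finset.range j, A ^ l * B

/-- `Q_i := ∑_{j=0}^{i−1} A_jᵀ Q A_j`. -/
noncomputable def Qmat {n : ℕ} (A Q : Matrix (Fin n) (Fin n) ℝ) (i : ℕ) :
    Matrix (Fin n) (Fin n) ℝ :=
  ∑ j ∈ Finset.range i, (A ^ j)ᵀ * Q * A ^ j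

/-- `S_i := ∑_{j=1}^{i−1} A_jᵀ Q B_j`. -/
noncomputable def Smat {n m : ℕ} (A : Matrix (Fin n) (Fin n) ℝ)
    (B : Matrix (Fin n) (Fin m) ℝ) (Q : Matrix (Fin n) (Fin n) ℝ) (i : ℕ) :
    Matrix (Fin n) (Fin m) ℝ :=
  ∑ j ∈ Finset.Ico 1 i, (A ^ j)ᵀ * Q * Bmat A B j

/-- `R_i := i·R + ∑_{j=1}^{i−1} B_jᵀ Q B_j`. -/
noncomputable def Rmat {n m : ℕ} (A : Matrix (Fin n) (Fin n) ℝ)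
    (B : Matrix (Fin n) (Fin m) ℝ) (Q : Matrix (Fin n) (Fin n) ℝ)
    (R : Matrix (Fin m) (Fin m) ℝ) (i : ℕ) : Matrix (Fin m) (Fin m) ℝ :=
  i • R + ∑ j ∈ Finset.Ico 1 i, (Bmat A B j)ᵀ * Q * Bmat A B j

/-- **Positive definiteness of the cumulated cost matrix.**
If `Q ≻ 0` and `R ≻ 0`, then for `i ≥ 1` the block matrix `[[Q_i, S_i], [S_iᵀ, R_i]]`
is symmetric positive definite (in particular invertible). -/
theorem cumulated_cost_block_posDef {n m : ℕ}
    (A : Matrix (Fin n) (Fin n) ℝ) (B : Matrix (Fin n) (Fin m) ℝ)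
    (Q : Matrix (Fin n) (Fin n) ℝ) (R : Matrix (Fin m) (Fin m) ℝ)
    (hQ : Q.PosDef) (hR : R.PosDef) (i : ℕ) (hi : 1 ≤ i) :
    (Matrix.fromBlocks (Qmat A Q i) (Smat A B Q i) (Smat A B Q i)ᵀ (Rmat A B Q R i)).PosDef := by
  induction i, hi using Nat.le_induction with
  | base =>
    have h1 : Matrix.fromBlocks (Qmat A Q 1) (Smat A B Q 1) (Smat A B Q 1)ᵀ (Rmat A B Q R 1)
        = Matrix.fromBlocks Q 0 0 R := by
      simp [Qmat, Smat, Rmat]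
    rw [h1]
    refine Matrix.PosDef.of_dotProduct_mulVec_pos ?_ ?_
    · exact Matrix.IsHermitian.fromBlocks hQ.1 (by simp) hR.1
    · intro x hx
      obtain ⟨u, v, rfl⟩ : ∃ u v, x = Sum.elim u v :=
        ⟨x ∘ Sum.inl, x ∘ Sum.inr, (Sum.elim_comp_inl_inr x).symm⟩
      have e : star (Sum.elim u v) ⬝ᵥ (Matrix.fromBlocks Q 0 0 R *ᵥ Sum.elim u v)
          = star u ⬝ᵥ (Q *ᵥ u) + star v ⬝ᵥ (R *ᵥ v) := by
        simp [Matrix.fromBlocks_mulVec, dotProduct]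
      rw [e]
      have hu := hQ.posSemidef.dotProduct_mulVec_nonneg u
      have hv := hR.posSemidef.dotProduct_mulVec_nonneg v
      by_cases h : u = 0
      · have hv0 : v ≠ 0 := by
          rintro rfl
          apply hx
          subst h
          simp
        have := hR.dotProduct_mulVec_pos hv0
        linarith
      · have := hQ.dotProduct_mulVec_pos h
        linarith
  | succ k hk ih =>
    have hQT : Qᵀ = Q := by simpa [Matrix.IsHermitian] using hQ.1
    have h1 : Matrix.fromBlocks (Qmat A Q (k+1)) (Smat A B Q (k+1)) (Smat A B Q (k+1))ᵀ
          (Rmat A B Q R (k+1))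
        = Matrix.fromBlocks (Qmat A Q k) (Smat A B Q k) (Smat A B Q k)ᵀ (Rmat A B Q R k)
          + ((Matrix.fromCols (0 : Matrix (Fin m) (Fin n) ℝ) (1 : Matrix (Fin m) (Fin m) ℝ))ᴴ * R
            * Matrix.fromCols (0 : Matrix (Fin m) (Fin n) ℝ) (1 : Matrix (Fin m) (Fin m) ℝ)
          + (Matrix.fromCols (A ^ k) (Bmat A B k))ᴴ * Q
            * Matrix.fromCols (A ^ k) (Bmat A B k)) := by
      simp only [Matrix.conjTranspose_eq_transpose_of_trivial, Matrix.transpose_fromCols,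
        Matrix.fromRows_mul _ _ R, Matrix.fromRows_mul _ _ Q, Matrix.fromRows_mul_fromCols, Matrix.fromBlocks_add]
      congr 1
      · simp [Qmat, Finset.sum_range_succ]
      · simp [Smat, Finset.sum_Ico_succ_top hk]
      · simp [Smat, Finset.sum_Ico_succ_top hk, hQT, Matrix.mul_assoc]
      · simp only [Rmat, Finset.sum_Ico_succ_top hk, add_smul, one_smul, Matrix.transpose_one,
          Matrix.one_mul, Matrix.mul_one]
        abel
    rw [h1]
    exact ih.add_posSemidef ((hR.posSemidef.conjTranspose_mul_mul_same _).add
      (hQ.posSemidef.conjTranspose_mul_mul_same _))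
end

section
/- Let A ∈ ℝ^{n×n}, B ∈ ℝ^{n×m}, let Q ∈ ℝ^{n×n}, R ∈ ℝ^{m×m} be symmetric positive semidefinite, let P ∈ ℝ^{n×n} be symmetric, K ∈ ℝ^{m×n}, and let i ≥ 1. Define A_j := A^j, B_j := ∑_{l=0}^{j−1} A^l B, Q_i := ∑_{j=0}^{i−1} A_jᵀ Q A_j, S_i := ∑_{j=1}^{i−1} A_jᵀ Q B_j, R_i := i·R + ∑_{j=1}^{i−1} B_jᵀ Q B_j. If (A_i + B_i K)ᵀ P (A_i + B_i K) − P + Q_i + S_i K + Kᵀ S_iᵀ + Kᵀ R_i K ⪯ 0, then for every x ∈ ℝ^n, with x⁺ := (A_i + B_i K) x: x⁺ᵀ P x⁺ − xᵀ P x ≤ − ∑_{j=0}^{i−1} [ ((A_j + B_j K) x)ᵀ Q ((A_j + B_j K) x) + (K x)ᵀ R (K x) ]. -/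
open Matrix

theorem Qmi_sum_identity {n m : ℕ}
    (A : Matrix (Fin n) (Fin n) ℝ) (B : Matrix (Fin n) (Fin m) ℝ)
    (Q : Matrix (Fin n) (Fin n) ℝ) (R : Matrix (Fin m) (Fin m) ℝ)
    (hQ : Qᵀ = Q) (K : Matrix (Fin m) (Fin n) ℝ) (i : ℕ) (hi : 1 ≤ i) :
    Qmat A Q i + Smat A B Q i * K + Kᵀ * (Smat A B Q i)ᵀ + Kᵀ * Rmat A B Q R i * K =
      ∑ j ∈ Finset.range i, ((A ^ j + Bmat A B j * K)ᵀ * Q * (A ^ j + Bmat A B j * K) +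
        Kᵀ * R * K) := by
  induction i, hi using Nat.le_induction with
  | base => simp [Qmat, Smat, Rmat, Bmat]
  | succ k hk ih =>
    rw [Finset.sum_range_succ, ← ih]
    have h1 : Qmat A Q (k + 1) = Qmat A Q k + (A ^ k)ᵀ * Q * A ^ k := by
      simp only [Qmat, Finset.sum_range_succ]
    have h2 : Smat A B Q (k + 1) = Smat A B Q k + (A ^ k)ᵀ * Q * Bmat A B k := by
      simp only [Smat, Finset.sum_Ico_succ_top hk]
    have h3 : Rmat A B Q R (k + 1) =
        Rmat A B Q R k + (R + (Bmat A B k)ᵀ * Q * Bmat A B k) := by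
      simp only [Rmat, Finset.sum_Ico_succ_top hk, add_smul, one_smul]
      abel
    rw [h1, h2, h3]
    simp only [Matrix.transpose_add, Matrix.transpose_mul, Matrix.transpose_transpose, hQ,
      Matrix.mul_add, Matrix.add_mul, Matrix.mul_assoc]
    abel

theorem Qmi_quad {n k : ℕ} (M : Matrix (Fin k) (Fin n) ℝ) (Q : Matrix (Fin k) (Fin k) ℝ)
    (x : Fin n → ℝ) : x ⬝ᵥ ((Mᵀ * Q * M) *ᵥ x) = (M *ᵥ x) ⬝ᵥ (Q *ᵥ (M *ᵥ x)) := by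
  rw [← Matrix.mulVec_mulVec, ← Matrix.mulVec_mulVec, Matrix.dotProduct_mulVec,
    Matrix.vecMul_transpose]

/-- **Terminal cost decrease from the quadratic matrix inequality.**
If `(A_i + B_i K)ᵀ P (A_i + B_i K) − P + Q_i + S_i K + Kᵀ S_iᵀ + Kᵀ R_i K ⪯ 0`
(stated as: its negative is positive semidefinite), then along `x⁺ = (A_i + B_i K) x` the
quadratic cost `xᵀ P x` decreases by at least the cumulated stage cost of `i` held-input
steps under the feedback `u = K x`. -/
theorem quadratic_matrix_inequality_cost_decrease {n m : ℕ}
    (A : Matrix (Fin n) (Fin n) ℝ) (B : Matrix (Fin n) (Fin m) ℝ)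
    (Q : Matrix (Fin n) (Fin n) ℝ) (R : Matrix (Fin m) (Fin m) ℝ)
    (hQ : Q.PosSemidef) (hR : R.PosSemidef)
    (P : Matrix (Fin n) (Fin n) ℝ) (hP : P.IsSymm)
    (K : Matrix (Fin m) (Fin n) ℝ) (i : ℕ) (hi : 1 ≤ i)
    (hQMI : (-((A ^ i + Bmat A B i * K)ᵀ * P * (A ^ i + Bmat A B i * K) - P +
        Qmat A Q i + Smat A B Q i * K + Kᵀ * (Smat A B Q i)ᵀ +
        Kᵀ * Rmat A B Q R i * K)).PosSemidef) :
    ∀ x : Fin n → ℝ,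
      ((A ^ i + Bmat A B i * K) *ᵥ x) ⬝ᵥ (P *ᵥ ((A ^ i + Bmat A B i * K) *ᵥ x)) -
          x ⬝ᵥ (P *ᵥ x) ≤
        -∑ j ∈ Finset.range i,
            (((A ^ j + Bmat A B j * K) *ᵥ x) ⬝ᵥ (Q *ᵥ ((A ^ j + Bmat A B j * K) *ᵥ x)) +
              (K *ᵥ x) ⬝ᵥ (R *ᵥ (K *ᵥ x))) := by
  intro x
  have hQs : Qᵀ = Q := by
    have h := hQ.isHermitian.eq
    rwa [Matrix.conjTranspose_eq_transpose_of_trivial] at h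
  have h := hQMI.dotProduct_mulVec_nonneg x
  have e := Qmi_sum_identity A B Q R hQs K i hi
  have e2 : ∀ X : Matrix (Fin n) (Fin n) ℝ,
      X - P + Qmat A Q i + Smat A B Q i * K + Kᵀ * (Smat A B Q i)ᵀ + Kᵀ * Rmat A B Q R i * K
      = X - P + (Qmat A Q i + Smat A B Q i * K + Kᵀ * (Smat A B Q i)ᵀ +
        Kᵀ * Rmat A B Q R i * K) := by
    intro X
    abel
  rw [e2, e, star_trivial, Matrix.neg_mulVec, dotProduct_neg, Matrix.add_mulVec,
    Matrix.sub_mulVec, dotProduct_add, dotProduct_sub, Matrix.sum_mulVec, dotProduct_sum,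
    Qmi_quad] at h
  simp only [Matrix.add_mulVec _ (Kᵀ * R * K), dotProduct_add _ _ ((Kᵀ * R * K) *ᵥ x),
    Qmi_quad] at h
  linarith
end

section
/- Let 𝒜 ∈ ℝ^{n×n}, ℬ ∈ ℝ^{n×m}, let N ∈ ℝ^{(n+m)×(n+m)} be a symmetric positive definite block matrix N = [[Q̂, Ŝ], [Ŝᵀ, R̂]] with inverse N⁻¹ = [[Q̃, S̃], [S̃ᵀ, R̃]] (Q̃ ∈ ℝ^{n×n}, S̃ ∈ ℝ^{n×m}, R̃ ∈ ℝ^{m×m}), let X ∈ ℝ^{n×n} be symmetric positive definite and Y ∈ ℝ^{m×n}. Suppose the symmetric 4×4 block matrix [[X, 0, 0, 𝒜X + ℬY], [0, Q̃, S̃, X], [0, S̃ᵀ, R̃, Y], [(𝒜X + ℬY)ᵀ, X, Yᵀ, X]] is positive semidefinite. Then, with P := X⁻¹ and K := Y X⁻¹, it holds that (𝒜 + ℬK)ᵀ P (𝒜 + ℬK) − P + Q̂ + Ŝ K + Kᵀ Ŝᵀ + Kᵀ R̂ K ⪯ 0. -/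
open Matrix

/-- **Schur-complement step of Lemma 1.**
Let `N = [[Q̂, Ŝ], [Ŝᵀ, R̂]] ≻ 0` with inverse `N⁻¹ = [[Q̃, S̃], [S̃ᵀ, R̃]]`, let `X ≻ 0` and
`Y` be such that the 4×4 block LMI
`[[X, 0, 0, 𝒜X + ℬY], [0, Q̃, S̃, X], [0, S̃ᵀ, R̃, Y], [(𝒜X + ℬY)ᵀ, X, Yᵀ, X]] ⪰ 0`
holds. Then, with `P := X⁻¹` and `K := Y X⁻¹`,
`(𝒜 + ℬK)ᵀ P (𝒜 + ℬK) − P + Q̂ + Ŝ K + Kᵀ Ŝᵀ + Kᵀ R̂ K ⪯ 0`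
(stated as: its negative is positive semidefinite). -/
theorem lmi_implies_qmi {n m : ℕ}
    (𝒜 : Matrix (Fin n) (Fin n) ℝ) (ℬ : Matrix (Fin n) (Fin m) ℝ)
    (Qh : Matrix (Fin n) (Fin n) ℝ) (Sh : Matrix (Fin n) (Fin m) ℝ)
    (Rh : Matrix (Fin m) (Fin m) ℝ)
    (Qt : Matrix (Fin n) (Fin n) ℝ) (St : Matrix (Fin n) (Fin m) ℝ)
    (Rt : Matrix (Fin m) (Fin m) ℝ)
    (hN : (Matrix.fromBlocks Qh Sh Shᵀ Rh).PosDef)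
    (hNinv : (Matrix.fromBlocks Qh Sh Shᵀ Rh)⁻¹ = Matrix.fromBlocks Qt St Stᵀ Rt)
    (X : Matrix (Fin n) (Fin n) ℝ) (hX : X.PosDef) (Y : Matrix (Fin m) (Fin n) ℝ)
    (hLMI : (Matrix.fromBlocks
        (Matrix.fromBlocks X 0 0 Qt)
        (Matrix.fromBlocks 0 (𝒜 * X + ℬ * Y) St X)
        (Matrix.fromBlocks 0 Stᵀ (𝒜 * X + ℬ * Y)ᵀ X)
        (Matrix.fromBlocks Rt Y Yᵀ X)).PosSemidef) :
    (-((𝒜 + ℬ * (Y * X⁻¹))ᵀ * X⁻¹ * (𝒜 + ℬ * (Y * X⁻¹)) - X⁻¹ +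
        Qh + Sh * (Y * X⁻¹) + (Y * X⁻¹)ᵀ * Shᵀ +
        (Y * X⁻¹)ᵀ * Rh * (Y * X⁻¹))).PosSemidef := by
  have hu : IsUnit X.det := (Matrix.isUnit_iff_isUnit_det X).1 hX.isUnit
  have hXP : X * X⁻¹ = 1 := Matrix.mul_nonsing_inv X hu
  have hPX : X⁻¹ * X = 1 := Matrix.nonsing_inv_mul X hu
  have hXs : Xᵀ = X := by
    have h := hX.isHermitian.eq
    rwa [Matrix.conjTranspose_eq_transpose_of_trivial] at h
  have hPs : (X⁻¹)ᵀ = X⁻¹ := by rw [Matrix.transpose_nonsing_inv, hXs]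
  have hNu : IsUnit (Matrix.fromBlocks Qh Sh Shᵀ Rh).det :=
    (Matrix.isUnit_iff_isUnit_det _).1 hN.isUnit
  have hNN := Matrix.nonsing_inv_mul _ hNu
  rw [hNinv, Matrix.fromBlocks_multiply, ← Matrix.fromBlocks_one, Matrix.fromBlocks_inj] at hNN
  obtain ⟨h11, h12, h21, h22⟩ := hNN
  obtain ⟨K, hK⟩ : ∃ K, K = Y * X⁻¹ := ⟨_, rfl⟩
  have hY : Y = K * X := by rw [hK, Matrix.mul_assoc, hPX, Matrix.mul_one]
  obtain ⟨F, hF⟩ : ∃ F, F = 𝒜 + ℬ * K := ⟨_, rfl⟩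
  have hFX : 𝒜 * X + ℬ * Y = F * X := by
    rw [hF, hY, Matrix.add_mul, Matrix.mul_assoc]
  rw [hFX] at hLMI
  rw [← hK, ← hF]
  have key := hLMI.conjTranspose_mul_mul_same
    (Matrix.fromRows (Matrix.fromRows (-(X⁻¹ * F)) (-(Qh + Sh * K)))
      (Matrix.fromRows (-(Shᵀ + Rh * K)) X⁻¹))
  have r1 : X * -(X⁻¹ * F) + F * X * X⁻¹ = 0 := by
    rw [Matrix.mul_neg, ← Matrix.mul_assoc, hXP, Matrix.mul_assoc F, hXP]; simp
  have r2 : Qt * -(Qh + Sh * K) + (St * -(Shᵀ + Rh * K) + X * X⁻¹) = 0 := by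
    have : Qt * -(Qh + Sh * K) + (St * -(Shᵀ + Rh * K) + X * X⁻¹)
      = -(Qt * Qh + St * Shᵀ) - (Qt * Sh + St * Rh) * K + X * X⁻¹ := by
      simp only [Matrix.mul_neg, Matrix.mul_add, Matrix.add_mul, Matrix.mul_assoc]; abel
    rw [this, h11, h12, hXP]; simp
  have r3 : Stᵀ * -(Qh + Sh * K) + (Rt * -(Shᵀ + Rh * K) + Y * X⁻¹) = 0 := by
    have : Stᵀ * -(Qh + Sh * K) + (Rt * -(Shᵀ + Rh * K) + Y * X⁻¹)
      = -(Stᵀ * Qh + Rt * Shᵀ) - (Stᵀ * Sh + Rt * Rh) * K + Y * X⁻¹ := by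
      simp only [Matrix.mul_neg, Matrix.mul_add, Matrix.add_mul, Matrix.mul_assoc]; abel
    rw [this, h21, h22, ← hK]; simp
  have hM : (Matrix.fromBlocks
        (Matrix.fromBlocks X 0 0 Qt)
        (Matrix.fromBlocks 0 (F * X) St X)
        (Matrix.fromBlocks 0 Stᵀ (F * X)ᵀ X)
        (Matrix.fromBlocks Rt Y Yᵀ X)) *
      (Matrix.fromRows (Matrix.fromRows (-(X⁻¹ * F)) (-(Qh + Sh * K)))
      (Matrix.fromRows (-(Shᵀ + Rh * K)) X⁻¹)) =
      Matrix.fromRows (Matrix.fromRows 0 0) (Matrix.fromRows 0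
        ((F * X)ᵀ * -(X⁻¹ * F) + X * -(Qh + Sh * K) + (Yᵀ * -(Shᵀ + Rh * K) + X * X⁻¹))) := by
    have hadd : ∀ {a b : ℕ} (A₁ B₁ : Matrix (Fin a) (Fin n) ℝ) (A₂ B₂ : Matrix (Fin b) (Fin n) ℝ),
        Matrix.fromRows A₁ A₂ + Matrix.fromRows B₁ B₂ =
          Matrix.fromRows (A₁ + B₁) (A₂ + B₂) := by
      intro a b A₁ B₁ A₂ B₂
      ext (i | i) j <;> rfl
    simp only [Matrix.fromBlocks_mul_fromRows, hadd, Matrix.zero_mul, zero_add, add_zero]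
    rw [r1, r2, r3]
  rw [Matrix.mul_assoc, hM] at key
  rw [Matrix.conjTranspose_fromRows_eq_fromCols_conjTranspose,
    Matrix.fromCols_mul_fromRows, Matrix.fromRows_zero, Matrix.mul_zero, zero_add,
    Matrix.conjTranspose_fromRows_eq_fromCols_conjTranspose,
    Matrix.fromCols_mul_fromRows, Matrix.mul_zero, zero_add,
    Matrix.conjTranspose_eq_transpose_of_trivial, hPs] at key
  have e : X⁻¹ * ((F * X)ᵀ * -(X⁻¹ * F) + X * -(Qh + Sh * K) +
      (Yᵀ * -(Shᵀ + Rh * K) + X * X⁻¹)) =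
      -(Fᵀ * X⁻¹ * F - X⁻¹ + Qh + Sh * K + Kᵀ * Shᵀ + Kᵀ * Rh * K) := by
    have c : ∀ {b : ℕ} (Z : Matrix (Fin n) (Fin b) ℝ), X⁻¹ * (X * Z) = Z := by
      intro b Z
      rw [← Matrix.mul_assoc, hPX, Matrix.one_mul]
    simp only [hY, Matrix.transpose_mul, hXs, Matrix.mul_neg, Matrix.mul_add,
      Matrix.mul_assoc, c]
    abel
  rwa [e] at key
end

section
/- Let A ∈ ℝ^{n×n}, B ∈ ℝ^{n×m}, let Q ∈ ℝ^{n×n}, R ∈ ℝ^{m×m} be symmetric positive definite, let M ≥ 1, p ≥ 1 be integers, and set i := pM. Define A_j := A^j, B_j := ∑_{l=0}^{j−1} A^l B, Q_i := ∑_{j=0}^{i−1} A_jᵀ Q A_j, S_i := ∑_{j=1}^{i−1} A_jᵀ Q B_j, R_i := i·R + ∑_{j=1}^{i−1} B_jᵀ Q B_j, and let [[Q̃_i, S̃_i], [S̃_iᵀ, R̃_i]] := [[Q_i, S_i], [S_iᵀ, R_i]]⁻¹. Let X ∈ ℝ^{n×n} be symmetric positive definite and Y ∈ ℝ^{m×n}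 be such that the symmetric block matrix [[X, 0, 0, A_i X + B_i Y], [0, Q̃_i, S̃_i, X], [0, S̃_iᵀ, R̃_i, Y], [(A_i X + B_i Y)ᵀ, X, Yᵀ, X]] is positive semidefinite. Then, with P_f := X⁻¹ and K_f := Y X⁻¹, for every x ∈ ℝ^n, with x⁺ := (A_i + B_i K_f) x: x⁺ᵀ P_f x⁺ − xᵀ P_f x ≤ − ∑_{j=0}^{i−1} [ ((A_j + B_j K_f) x)ᵀ Q ((A_j + B_j K_f) x) + (K_f x)ᵀ R (K_f x) ]. -/
open Matrix

lemma cost_identity {n m : ℕ}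
    (A : Matrix (Fin n) (Fin n) ℝ) (B : Matrix (Fin n) (Fin m) ℝ)
    (Q : Matrix (Fin n) (Fin n) ℝ) (R : Matrix (Fin m) (Fin m) ℝ)
    (i : ℕ) (hi : 1 ≤ i) (hQ : Qᵀ = Q) (x : Fin n → ℝ) (u : Fin m → ℝ) :
    x ⬝ᵥ (Qmat A Q i *ᵥ x + Smat A B Q i *ᵥ u) +
      u ⬝ᵥ ((Smat A B Q i)ᵀ *ᵥ x + Rmat A B Q R i *ᵥ u) =
    ∑ j ∈ Finset.range i, ((A ^ j *ᵥ x + Bmat A B j *ᵥ u) ⬝ᵥ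
      (Q *ᵥ (A ^ j *ᵥ x + Bmat A B j *ᵥ u)) + u ⬝ᵥ (R *ᵥ u)) := by
  have hB : Bmat A B 0 = 0 := by simp [Bmat]
  have hS : Smat A B Q i = ∑ j ∈ Finset.range i, (A ^ j)ᵀ * Q * Bmat A B j := by
    rw [Finset.range_eq_Ico, Finset.sum_eq_sum_Ico_succ_bot (by omega)]
    simp [Smat, hB]
  have hR : Rmat A B Q R i = i • R + ∑ j ∈ Finset.range i, (Bmat A B j)ᵀ * Q * Bmat A B j := by
    rw [Finset.range_eq_Ico, Finset.sum_eq_sum_Ico_succ_bot (by omega)]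
    simp [Rmat, hB]
  have hl : ∀ {k l : ℕ} (U : Matrix (Fin n) (Fin k) ℝ) (V : Matrix (Fin n) (Fin l) ℝ)
      (a : Fin k → ℝ) (b : Fin l → ℝ),
      a ⬝ᵥ ((Uᵀ * Q * V) *ᵥ b) = (U *ᵥ a) ⬝ᵥ (Q *ᵥ (V *ᵥ b)) := by
    intro k l U V a b
    rw [← mulVec_mulVec, ← mulVec_mulVec, dotProduct_mulVec, vecMul_transpose]
  have hs : ∀ j, ((A ^ j)ᵀ * Q * Bmat A B j)ᵀ = (Bmat A B j)ᵀ * Q * A ^ j := by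
    intro j
    simp [Matrix.transpose_mul, hQ, Matrix.mul_assoc]
  rw [hS, hR, Qmat, Matrix.transpose_sum]
  simp only [hs, Matrix.add_mulVec, Matrix.sum_mulVec, dotProduct_add, dotProduct_sum, hl,
    Finset.sum_add_distrib, mulVec_add, add_dotProduct, smul_mulVec, dotProduct_smul,
    Finset.sum_const, Finset.card_range]
  ring

/-- **Terminal-cost decrease of Lemma 1.**
With `i := pM` (`M ≥ 1`, `p ≥ 1`), `Q, R ≻ 0`, and the inverse cumulated-cost blocks
`[[Q̃_i, S̃_i], [S̃_iᵀ, R̃_i]] = [[Q_i, S_i], [S_iᵀ, R_i]]⁻¹`: if `X ≻ 0` and `Y` satisfy the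
4×4 block LMI, then with `P_f := X⁻¹`, `K_f := Y X⁻¹`, for every `x` and
`x⁺ := (A_i + B_i K_f) x`,
`x⁺ᵀ P_f x⁺ − xᵀ P_f x ≤ −∑_{j<i} [((A_j + B_j K_f)x)ᵀ Q ((A_j + B_j K_f)x) + (K_f x)ᵀ R (K_f x)]`. -/
theorem terminal_cost_decrease {n m : ℕ}
    (A : Matrix (Fin n) (Fin n) ℝ) (B : Matrix (Fin n) (Fin m) ℝ)
    (Q : Matrix (Fin n) (Fin n) ℝ) (R : Matrix (Fin m) (Fin m) ℝ)
    (hQ : Q.PosDef) (hR : R.PosDef)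
    (M p : ℕ) (hM : 1 ≤ M) (hp : 1 ≤ p) (i : ℕ) (hi : i = p * M)
    (Qt : Matrix (Fin n) (Fin n) ℝ) (St : Matrix (Fin n) (Fin m) ℝ)
    (Rt : Matrix (Fin m) (Fin m) ℝ)
    (hinv : (Matrix.fromBlocks (Qmat A Q i) (Smat A B Q i) (Smat A B Q i)ᵀ
        (Rmat A B Q R i))⁻¹ = Matrix.fromBlocks Qt St Stᵀ Rt)
    (X : Matrix (Fin n) (Fin n) ℝ) (hX : X.PosDef) (Y : Matrix (Fin m) (Fin n) ℝ)
    (hLMI : (Matrix.fromBlocks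
        (Matrix.fromBlocks X 0 0 Qt)
        (Matrix.fromBlocks 0 (A ^ i * X + Bmat A B i * Y) St X)
        (Matrix.fromBlocks 0 Stᵀ (A ^ i * X + Bmat A B i * Y)ᵀ X)
        (Matrix.fromBlocks Rt Y Yᵀ X)).PosSemidef) :
    ∀ x : Fin n → ℝ,
      ((A ^ i + Bmat A B i * (Y * X⁻¹)) *ᵥ x) ⬝ᵥ
          (X⁻¹ *ᵥ ((A ^ i + Bmat A B i * (Y * X⁻¹)) *ᵥ x)) - x ⬝ᵥ (X⁻¹ *ᵥ x) ≤
        -∑ j ∈ Finset.range i,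
            (((A ^ j + Bmat A B j * (Y * X⁻¹)) *ᵥ x) ⬝ᵥ
                (Q *ᵥ ((A ^ j + Bmat A B j * (Y * X⁻¹)) *ᵥ x)) +
              ((Y * X⁻¹) *ᵥ x) ⬝ᵥ (R *ᵥ ((Y * X⁻¹) *ᵥ x))) := by
  intro x
  have hi1 : 1 ≤ i := by
    rw [hi]; exact Nat.mul_pos hp hM
  have hQs : Qᵀ = Q := by simpa using hQ.isHermitian.eq
  have hXs : Xᵀ = X := by simpa using hX.isHermitian.eq
  have hid := cost_identity A B Q R i hi1 hQs
  set H := Matrix.fromBlocks (Qmat A Q i) (Smat A B Q i) (Smat A B Q i)ᵀ (Rmat A B Q R i) with hH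
  have hHu : IsUnit H := by
    rw [← Matrix.mulVec_injective_iff_isUnit]
    rw [← Matrix.coe_mulVecLin, injective_iff_map_eq_zero]
    intro w hw
    rw [Matrix.mulVecLin_apply] at hw
    obtain ⟨a, u, rfl⟩ : ∃ a u, w = Sum.elim a u := ⟨w ∘ Sum.inl, w ∘ Sum.inr, by simp⟩
    have h0 : Sum.elim a u ⬝ᵥ (H *ᵥ Sum.elim a u) = 0 := by rw [hw]; simp
    rw [hH, Matrix.fromBlocks_mulVec, sumElim_dotProduct_sumElim] at h0
    simp only [Sum.elim_comp_inl, Sum.elim_comp_inr] at h0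
    rw [hid] at h0
    have hQn : ∀ v, 0 ≤ v ⬝ᵥ (Q *ᵥ v) := fun v => by
      simpa using hQ.posSemidef.dotProduct_mulVec_nonneg v
    have hRn : ∀ v, 0 ≤ v ⬝ᵥ (R *ᵥ v) := fun v => by
      simpa using hR.posSemidef.dotProduct_mulVec_nonneg v
    rw [Finset.sum_eq_zero_iff_of_nonneg (fun j _ => add_nonneg (hQn _) (hRn _))] at h0
    have h1 := h0 0 (Finset.mem_range.2 hi1)
    simp only [Bmat, pow_zero, one_mulVec, Finset.range_zero, Finset.sum_empty, zero_mulVec,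
      add_zero] at h1
    have ha : a = 0 := by
      by_contra hne
      have := hQ.dotProduct_mulVec_pos hne
      simp only [star_trivial] at this
      linarith [hRn u]
    have hu : u = 0 := by
      by_contra hne
      have := hR.dotProduct_mulVec_pos hne
      simp only [star_trivial] at this
      linarith [hQn a]
    subst ha hu
    simp
  have hHd : IsUnit H.det := (Matrix.isUnit_iff_isUnit_det H).1 hHu
  have hXd : IsUnit X.det := (Matrix.isUnit_iff_isUnit_det X).1 hX.isUnit
  obtain ⟨z, hz⟩ : ∃ z, z = X⁻¹ *ᵥ x := ⟨_, rfl⟩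
  have hXz : X *ᵥ z = x := by
    rw [hz, mulVec_mulVec, Matrix.mul_nonsing_inv _ hXd, one_mulVec]
  obtain ⟨u, hu⟩ : ∃ u, u = Y *ᵥ z := ⟨_, rfl⟩
  have hK : (Y * X⁻¹) *ᵥ x = u := by rw [← mulVec_mulVec, ← hz, hu]
  have hj : ∀ j, (A ^ j + Bmat A B j * (Y * X⁻¹)) *ᵥ x = A ^ j *ᵥ x + Bmat A B j *ᵥ u := by
    intro j
    rw [add_mulVec, ← mulVec_mulVec, hK]
  simp only [hj, hK]
  rw [← hid, ← hz]
  obtain ⟨y, hy⟩ : ∃ y, y = A ^ i *ᵥ x + Bmat A B i *ᵥ u := ⟨_, rfl⟩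
  have hFz : (A ^ i * X + Bmat A B i * Y) *ᵥ z = y := by
    rw [add_mulVec, ← mulVec_mulVec, ← mulVec_mulVec, hXz, ← hu, hy]
  rw [← hy]
  obtain ⟨s, hs⟩ : ∃ s, s = X⁻¹ *ᵥ y := ⟨_, rfl⟩
  have hXs' : X *ᵥ s = y := by
    rw [hs, mulVec_mulVec, Matrix.mul_nonsing_inv _ hXd, one_mulVec]
  rw [← hs]
  obtain ⟨q, hq⟩ : ∃ q, q = Qmat A Q i *ᵥ x + Smat A B Q i *ᵥ u := ⟨_, rfl⟩
  obtain ⟨r, hr⟩ : ∃ r, r = (Smat A B Q i)ᵀ *ᵥ x + Rmat A B Q R i *ᵥ u := ⟨_, rfl⟩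
  rw [← hq, ← hr]
  have hHw : H *ᵥ Sum.elim x u = Sum.elim q r := by
    rw [hH, Matrix.fromBlocks_mulVec]
    simp only [Sum.elim_comp_inl, Sum.elim_comp_inr, hq, hr]
  have hw : Matrix.fromBlocks Qt St Stᵀ Rt *ᵥ Sum.elim q r = Sum.elim x u := by
    rw [← hinv, ← hHw, mulVec_mulVec, Matrix.nonsing_inv_mul _ hHd, one_mulVec]
  rw [Matrix.fromBlocks_mulVec] at hw
  simp only [Sum.elim_comp_inl, Sum.elim_comp_inr] at hw
  obtain ⟨hw1, hw2⟩ := Sum.elim_eq_iff.1 hw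
  have key := hLMI.dotProduct_mulVec_nonneg
    (Sum.elim (Sum.elim (-s) (-q)) (Sum.elim (-r) z))
  simp only [star_trivial, Matrix.fromBlocks_mulVec, Sum.elim_comp_inl, Sum.elim_comp_inr,
    sumElim_dotProduct_sumElim, dotProduct_add, zero_mulVec, mulVec_neg, hXs', hFz, hXz, ← hu,
    neg_dotProduct, dotProduct_neg, dotProduct_zero, ← Sum.elim_add_add] at key
  have e1 : z ⬝ᵥ ((A ^ i * X + Bmat A B i * Y)ᵀ *ᵥ s) = y ⬝ᵥ s := by
    rw [dotProduct_mulVec, vecMul_transpose, hFz]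
  have e2 : z ⬝ᵥ (X *ᵥ q) = x ⬝ᵥ q := by
    rw [dotProduct_mulVec, ← mulVec_transpose, hXs, hXz]
  have e3 : z ⬝ᵥ (Yᵀ *ᵥ r) = u ⬝ᵥ r := by
    rw [dotProduct_mulVec, vecMul_transpose, hu]
  have f1 := congrArg (fun v => q ⬝ᵥ v) hw1
  have f2 := congrArg (fun v => r ⬝ᵥ v) hw2
  simp only [dotProduct_add] at f1 f2
  rw [e1, e2, e3] at key
  linarith [dotProduct_comm s y, dotProduct_comm q x, dotProduct_comm r u, dotProduct_comm z x]
end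

section
/- Let A ∈ ℝ^{n×n}, B ∈ ℝ^{n×m}, K_f ∈ ℝ^{m×n}, let g, c, b ∈ ℕ with 1 ≤ g ≤ c ≤ b, M := ⌈c/g⌉, and let P ∈ ℕ. Let X ⊆ ℝ^n, U ⊆ ℝ^m and X_f ⊆ X satisfy K_f X_f ⊆ U and (A_{pM} + B_{pM} K_f) X_f ⊆ X_f for all p ∈ {1, …, P+1}, where A_j := A^j and B_j := ∑_{l=0}^{j−1} A^l B. Then for every p ∈ {1, …, P+1} and every (x, w, β) ∈ X_f × U × ℤ∩[c−g, b], the state after p sampling instants of length M under the terminal control law with loss pattern (1, 0, …, 0), namely ((A_{pM} + B_{pM} K_f)x, K_f x, β_p) with β_p the p-fold iterate of β ↦ min(β + Mg − c, b) applied to β, again lies in X_f × U × ℤ∩[c−g, b]. -/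
open Matrix

/-- **Terminal-set invariance (claim (15) of Lemma 1).**
Under the terminal control law `v = K_f x` with sampling interval `M = ⌈c/g⌉` and loss
pattern `(1, 0, …, 0)`, the terminal set `Ξ_f = X_f × U × (ℤ ∩ [c−g, b])` is invariant:
for `p ∈ {1, …, P+1}` and `(x, w, β) ∈ Ξ_f`, the successor overall state
`((A_{pM} + B_{pM}K_f)x, K_f x, β_p)`, where `β_p` is the `p`-fold iterate of
`β ↦ min (β + Mg − c) b`, again lies in `Ξ_f`. -/
theorem terminal_set_invariance {n m : ℕ}
    (A : Matrix (Fin n) (Fin n) ℝ) (B : Matrix (Fin n) (Fin m) ℝ)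
    (Kf : Matrix (Fin m) (Fin n) ℝ)
    (g c b : ℕ) (hg : 1 ≤ g) (hgc : g ≤ c) (hcb : c ≤ b)
    (M : ℕ) (hM : M = ⌈(c : ℚ) / (g : ℚ)⌉₊) (P : ℕ)
    (X : Set (Fin n → ℝ)) (U : Set (Fin m → ℝ)) (Xf : Set (Fin n → ℝ))
    (hXfX : Xf ⊆ X)
    (hKfU : ∀ x ∈ Xf, Kf *ᵥ x ∈ U)
    (hXfInv : ∀ p : ℕ, 1 ≤ p → p ≤ P + 1 → ∀ x ∈ Xf,
      (A ^ (p * M) + Bmat A B (p * M) * Kf) *ᵥ x ∈ Xf) :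
    ∀ p : ℕ, 1 ≤ p → p ≤ P + 1 →
      ∀ x ∈ Xf, ∀ w ∈ U, ∀ β : ℤ, (c : ℤ) - (g : ℤ) ≤ β → β ≤ (b : ℤ) →
        (A ^ (p * M) + Bmat A B (p * M) * Kf) *ᵥ x ∈ Xf ∧
        Kf *ᵥ x ∈ U ∧
        (c : ℤ) - (g : ℤ) ≤ (fun β' : ℤ => min (β' + (M * g : ℤ) - (c : ℤ)) (b : ℤ))^[p] β ∧
        (fun β' : ℤ => min (β' + (M * g : ℤ) - (c : ℤ)) (b : ℤ))^[p] β ≤ (b : ℤ) := by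
  have hMg : (c : ℤ) ≤ (M : ℤ) * (g : ℤ) := by
    have hg0 : (0 : ℚ) < (g : ℚ) := by exact_mod_cast hg
    have h : (c : ℚ) / (g : ℚ) ≤ (M : ℚ) := by
      rw [hM]
      exact Nat.le_ceil _
    rw [div_le_iff₀ hg0] at h
    exact_mod_cast h
  intro p hp1 hp2 x hx w _ β hβ1 hβ2
  refine ⟨hXfInv p hp1 hp2 x hx, hKfU x hx, ?_⟩
  clear hp1 hp2
  induction p with
  | zero => exact ⟨hβ1, hβ2⟩
  | succ k ih =>
    rw [Function.iterate_succ_apply']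
    obtain ⟨h1, _⟩ := ih
    refine ⟨le_min ?_ ?_, min_le_right _ _⟩
    · linarith
    · have : (c : ℤ) ≤ b := by exact_mod_cast hcb
      have : (0 : ℤ) ≤ g := Int.natCast_nonneg g
      linarith
end

section
/- Let P, L, N, r ∈ ℕ with L = N + P and N ≥ 1, let r⁺ ∈ {0, r+1}, and assume r ≤ P if r⁺ = 0, and r + 1 ≤ P if r⁺ = r + 1. Let σ' ∈ D^P_L(r⁺). Define σ : {0, …, L−1} → {0,1} by σ(0) := 1 if r⁺ = 0 and σ(0) := 0 if r⁺ = r+1, and σ(i+1) := σ'(i) for i ∈ {0, …, L−2}. Then σ ∈ D^P_L(r). (Hence for every admissible loss sequence at the next sampling instant there exists an admissible loss sequence at the current instant whose first entry matches the realized loss and whose remaining entries are the given sequence.) -/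
/-- The admissible loss-sequence set `D^P_L(r)`: maps `σ : {0,…,L−1} → {0,1}` (encoded as
`σ : ℕ → Bool`, only indices `< L` being constrained) such that (i) some transmission in the
window succeeds; (ii) the first success occurs at an index `≤ P − r`; (iii) consecutive
successes are at most `P + 1` apart; (iv) the last success `i` satisfies `L − i ≤ P + 1`. -/
def Admissible (P L r : ℕ) (σ : ℕ → Bool) : Prop :=
  (∃ i, i < L ∧ σ i = true) ∧
  (∀ i, i < L → σ i = true → (∀ l, l < i → σ l = false) → i ≤ P - r) ∧
  (∀ i i', i < i' → i' < L → σ i = true → σ i' = true →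
    (∀ l, i < l → l < i' → σ l = false) → i' - i ≤ P + 1) ∧
  (∀ i, i < L → σ i = true → (∀ l, i < l → l < L → σ l = false) → L - i ≤ P + 1)

/-- **Shifting admissible loss sequences backwards (recursive feasibility step).**
Let `L = N + P`, `N ≥ 1`, `r⁺ ∈ {0, r+1}` with `r ≤ P` if `r⁺ = 0` and `r + 1 ≤ P` if
`r⁺ = r + 1`. If `σ' ∈ D^P_L(r⁺)`, then the sequence `σ` with `σ 0 = 1` iff `r⁺ = 0` and
`σ (i+1) = σ' i` belongs to `D^P_L(r)`. -/
theorem admissible_shift (P L N r : ℕ) (hL : L = N + P) (hN : 1 ≤ N)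
    (rplus : ℕ) (hrplus : rplus = 0 ∨ rplus = r + 1)
    (h0 : rplus = 0 → r ≤ P) (h1 : rplus = r + 1 → r + 1 ≤ P)
    (σ' : ℕ → Bool) (hσ' : Admissible P L rplus σ')
    (σ : ℕ → Bool)
    (hσ0 : σ 0 = (if rplus = 0 then true else false))
    (hσs : ∀ i, σ (i + 1) = σ' i) :
    Admissible P L r σ := by
  obtain ⟨⟨a, haL, ha⟩, hfst, hgap, hlast⟩ := hσ'
  have hex : ∃ m, m < L ∧ σ' m = true ∧ ∀ l, l < m → σ' l = false := by
    classical
    have hE : ∃ m, σ' m = true := ⟨a, ha⟩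
    refine ⟨Nat.find hE, lt_of_le_of_lt (Nat.find_min' hE ha) haL, Nat.find_spec hE, ?_⟩
    intro l hl
    simpa using Nat.find_min hE hl
  obtain ⟨m, hmL, hm, hmin⟩ := hex
  have hmP := hfst m hmL hm hmin
  refine ⟨?_, ?_, ?_, ?_⟩
  · rcases hrplus with h | h
    · exact ⟨0, by omega, by simp [hσ0, h]⟩
    · have := h1 h
      exact ⟨m + 1, by omega, by rw [hσs, hm]⟩
  · intro i hi hs hl
    rcases i with _ | j
    · omega
    · rcases hrplus with h | h
      · have h2 := hl 0 (by omega)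
        simp [hσ0, h] at h2
      · have := h1 h
        have := hfst j (by omega) (by rw [← hσs, hs])
          (fun l hlj => by rw [← hσs]; exact hl (l + 1) (by omega))
        omega
  · intro i i' hii hi' hs hs' hl
    obtain ⟨j', rfl⟩ : ∃ j', i' = j' + 1 := ⟨i' - 1, by omega⟩
    rw [hσs] at hs'
    rcases i with _ | j
    · have := hfst j' (by omega) hs'
        (fun l hlj => by rw [← hσs]; exact hl (l + 1) (by omega) (by omega))
      omega
    · rw [hσs] at hs
      have := hgap j j' (by omega) (by omega) hs hs'
        (fun l h2 h3 => by rw [← hσs]; exact hl (l + 1) (by omega) (by omega))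
      omega
  · intro i hi hs hl
    have hl' : ∀ l, i < l + 1 → l + 1 < L → σ' l = false := fun l h2 h3 => by
      rw [← hσs]; exact hl (l + 1) h2 h3
    rcases i with _ | j
    · skip
      have : m + 1 = L := by
        by_contra hne
        have := hl' m (by omega) (by omega)
        simp [hm] at this
      omega
    · rw [hσs] at hs
      cases hc : σ' (L - 1) with
      | true =>
        have := hgap j (L - 1) (by omega) (by omega) hs hc
          (fun l h2 h3 => hl' l (by omega) (by omega))
        omega
      | false =>
        have := hlast j (by omega) hs (fun l h2 h3 => by
          by_cases h4 : l = L - 1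
          · rw [h4, hc]
          · exact hl' l (by omega) (by omega))
        omega
end
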